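/- Let f : ℝⁿ → ℝ be continuously differentiable and strongly convex with constant μ > 0, and let x* be its (unique) global minimizer. Let (xᵏ)_{k≥0} be a sequence in ℝⁿ and (tₖ) a sequence of positive reals such that for every k: ∇f(xᵏ) ≠ 0, f(xᵏ - tₖ•∇f(xᵏ)) = f(xᵏ), and f(xᵏ⁺¹) ≤ f(xᵏ - (tₖ/2)•∇f(xᵏ)). Then xᵏ → x* as k → ∞. -/

import Mathlib

/-!
Since `xᵏ` and `yᵏ` lie on the same level set, strong convexity at their midpoint `zᵏ` makes `f`
drop by at least `μ / 8 * ‖xᵏ - yᵏ‖ ^ 2`, so `xᵏ - yᵏ → 0` because `f` is bounded below. By Rolle's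
theorem some `ξ` between `xᵏ` and `yᵏ` has `∇ f ξ` orthogonal to `∇ f xᵏ`, whence
`‖∇ f xᵏ‖ ≤ ‖∇ f xᵏ - ∇ f ξ‖`. Uniform continuity of the gradient on the initial sublevel set, which
is compact in finite dimension, then forces `∇ f xᵏ → 0`, and strong convexity bounds
`μ * ‖xᵏ - x*‖` by `‖∇ f xᵏ‖`.
-/

open Filter Set Topology
open scoped Gradient

section StrongConvexity

variable {E : Type*} [NormedAddCommGroup E] [NormedSpace ℝ E]
  {s : Set E} {f : E → ℝ} {m : ℝ} {x y a : E}

lemma strongConvexOn_univ_of_forall_mem_Icc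
    (h : ∀ x y : E, ∀ r : ℝ, r ∈ Icc (0 : ℝ) 1 →
      f (r • x + (1 - r) • y) ≤ r * f x + (1 - r) * f y - m / 2 * r * (1 - r) * ‖x - y‖ ^ 2) :
    StrongConvexOn univ m f := by
  refine ⟨convex_univ, fun x _ y _ p q hp hq hpq ↦ ?_⟩
  obtain rfl : q = 1 - p := by linarith
  calc f (p • x + (1 - p) • y)
      ≤ p * f x + (1 - p) * f y - m / 2 * p * (1 - p) * ‖x - y‖ ^ 2 :=
        h x y p ⟨hp, sub_nonneg.mp hq⟩
    _ = p • f x + (1 - p) • f y - p * (1 - p) * (m / 2 * ‖x - y‖ ^ 2) := by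
        simp only [smul_eq_mul]; ring

lemma apply_midpoint_le_of_strongConvexOn (hf : StrongConvexOn s m f) (hx : x ∈ s) (hy : y ∈ s) :
    f (midpoint ℝ x y) ≤ (f x + f y) / 2 - m / 8 * ‖x - y‖ ^ 2 := by
  have hconv := hf.2 hx hy one_half_pos.le one_half_pos.le (add_halves 1)
  have hmid : midpoint ℝ x y = (1 / 2 : ℝ) • x + (1 / 2 : ℝ) • y := by
    rw [midpoint_eq_smul_add, smul_add, invOf_eq_inv, one_div]
  rw [hmid]
  simp only [smul_eq_mul] at hconv
  linarith

lemma inv_mul_secant_le_of_strongConvexOn (hf : StrongConvexOn s m f) (hx : x ∈ s) (hy : y ∈ s)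
    {r : ℝ} (hr : r ∈ Ioc (0 : ℝ) 1) :
    r⁻¹ * (f (x + r • (y - x)) - f x) ≤ f y - f x - (1 - r) * (m / 2 * ‖y - x‖ ^ 2) := by
  have hconv := hf.2 hy hx hr.1.le (sub_nonneg.mpr hr.2) (add_sub_cancel r 1)
  have hpoint : r • y + (1 - r) • x = x + r • (y - x) := by module
  rw [hpoint] at hconv
  simp only [smul_eq_mul] at hconv
  rw [inv_mul_le_iff₀ hr.1]
  linarith

lemma add_lineDeriv_add_le_of_strongConvexOn (hf : StrongConvexOn s m f) (hx : x ∈ s) (hy : y ∈ s)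
    {d : ℝ} (hd : HasLineDerivAt ℝ f d x (y - x)) :
    f x + d + m / 2 * ‖y - x‖ ^ 2 ≤ f y := by
  have hsecant : Tendsto (fun r : ℝ ↦ r⁻¹ * (f (x + r • (y - x)) - f x)) (𝓝[>] 0) (𝓝 d) := by
    simpa using hd.tendsto_slope_zero_right
  have hbound : Tendsto (fun r : ℝ ↦ f y - f x - (1 - r) * (m / 2 * ‖y - x‖ ^ 2)) (𝓝[>] 0)
      (𝓝 (f y - f x - (1 - 0) * (m / 2 * ‖y - x‖ ^ 2))) :=
    tendsto_nhdsWithin_of_tendsto_nhds (Continuous.tendsto (by fun_prop) 0)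
  have hlim := le_of_tendsto_of_tendsto hsecant hbound <| by
    filter_upwards [Ioc_mem_nhdsGT one_pos] with r hr
    exact inv_mul_secant_le_of_strongConvexOn hf hx hy hr
  linarith

lemma mul_norm_sub_le_norm_fderiv_sub_of_strongConvexOn (hf : StrongConvexOn s m f)
    (hx : x ∈ s) (hy : y ∈ s) {fx' fy' : E →L[ℝ] ℝ}
    (hfx : HasFDerivAt f fx' x) (hfy : HasFDerivAt f fy' y) :
    m * ‖x - y‖ ≤ ‖fx' - fy'‖ := by
  have hmono : m * ‖x - y‖ ^ 2 ≤ (fx' - fy') (x - y) := by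
    have hxy := add_lineDeriv_add_le_of_strongConvexOn hf hx hy (hfx.hasLineDerivAt (y - x))
    have hyx := add_lineDeriv_add_le_of_strongConvexOn hf hy hx (hfy.hasLineDerivAt (x - y))
    rw [norm_sub_rev, ← neg_sub x y, map_neg] at hxy
    rw [sub_apply]
    linarith
  rcases (norm_nonneg (x - y)).eq_or_lt with hzero | hpos
  · simp [← hzero]
  · refine le_of_mul_le_mul_right ?_ hpos
    calc m * ‖x - y‖ * ‖x - y‖ = m * ‖x - y‖ ^ 2 := by ring
      _ ≤ (fx' - fy') (x - y) := hmono
      _ ≤ ‖fx' - fy'‖ * ‖x - y‖ := (Real.le_norm_self _).trans ((fx' - fy').le_opNorm _)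

lemma isBounded_sublevel_of_strongConvexOn (hm : 0 < m) (hf : StrongConvexOn s m f) (ha : a ∈ s)
    (hcrit : HasFDerivAt f (0 : E →L[ℝ] ℝ) a) (c : ℝ) :
    Bornology.IsBounded {y ∈ s | f y ≤ c} := by
  refine (Metric.isBounded_closedBall (x := a) (r := √(2 / m * (c - f a)))).subset ?_
  rintro y ⟨hy, hyc⟩
  have hgrowth := add_lineDeriv_add_le_of_strongConvexOn hf ha hy (hcrit.hasLineDerivAt (y - a))
  rw [zero_apply, add_zero] at hgrowth
  rw [mem_closedBall_iff_norm]
  apply Real.le_sqrt_of_sq_le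
  rw [div_mul_eq_mul_div, le_div_iff₀ hm]
  linarith

end StrongConvexity

section Gradient

variable {E : Type*} [NormedAddCommGroup E] [InnerProductSpace ℝ E] [CompleteSpace E]
  {f : E → ℝ} {a b : E} {t : ℝ}

lemma norm_gradient (f : E → ℝ) (a : E) : ‖∇ f a‖ = ‖fderiv ℝ f a‖ :=
  LinearIsometryEquiv.norm_map _ _

lemma continuous_gradient_of_contDiff (hf : ContDiff ℝ 1 f) : Continuous (∇ f) :=
  (InnerProductSpace.toDual ℝ E).symm.continuous.comp (hf.continuous_fderiv one_ne_zero)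

lemma exists_mem_segment_inner_gradient_eq_zero (hf : Differentiable ℝ f) (hab : f a = f b) :
    ∃ ξ ∈ segment ℝ a b, inner ℝ (∇ f ξ) (b - a) = 0 := by
  obtain ⟨ξ, hξ, hmean⟩ := domain_mvt (fun z _ ↦ (hf z).hasFDerivAt.hasFDerivWithinAt)
    convex_univ (mem_univ a) (mem_univ b)
  exact ⟨ξ, hξ, by rw [inner_gradient_left, ← hmean, hab, sub_self]⟩

lemma exists_mem_segment_norm_gradient_le (hf : Differentiable ℝ f) (ht : t ≠ 0)
    (hlevel : f (a - t • ∇ f a) = f a) :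
    ∃ ξ ∈ segment ℝ a (a - t • ∇ f a), ‖∇ f a‖ ≤ ‖∇ f a - ∇ f ξ‖ := by
  obtain ⟨ξ, hξ, hinner⟩ := exists_mem_segment_inner_gradient_eq_zero hf hlevel.symm
  refine ⟨ξ, hξ, ?_⟩
  have horth : inner ℝ (∇ f a) (∇ f ξ) = 0 := by
    rw [real_inner_comm]
    simpa [inner_neg_right, inner_smul_right, ht] using hinner
  have hpyth := norm_sub_sq_eq_norm_sq_add_norm_sq_real horth
  refine (mul_self_le_mul_self_iff (norm_nonneg _) (norm_nonneg _)).mpr ?_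
  rw [hpyth]
  exact le_add_of_nonneg_right (mul_self_nonneg _)

end Gradient

lemma uniformContinuousOn_gradient_sublevel_of_strongConvexOn {E : Type*} [NormedAddCommGroup E]
    [InnerProductSpace ℝ E] [ProperSpace E] {f : E → ℝ} {m : ℝ} (hm : 0 < m)
    (hf : StrongConvexOn univ m f) (hC1 : ContDiff ℝ 1 f) {a : E} (hmin : IsMinOn f univ a)
    (c : ℝ) : UniformContinuousOn (∇ f) {y | f y ≤ c} := by
  have hcrit : HasFDerivAt f (0 : E →L[ℝ] ℝ) a := by
    rw [← (hmin.isLocalMin univ_mem).fderiv_eq_zero]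
    exact (hC1.differentiable one_ne_zero a).hasFDerivAt
  have hbounded : Bornology.IsBounded {y | f y ≤ c} := by
    simpa using isBounded_sublevel_of_strongConvexOn hm hf (mem_univ a) hcrit c
  have hcompact : IsCompact {y | f y ≤ c} :=
    Metric.isCompact_of_isClosed_isBounded (isClosed_le hC1.continuous continuous_const) hbounded
  exact hcompact.uniformContinuousOn_of_continuous
    (continuous_gradient_of_contDiff hC1).continuousOn

/-- `x` is a sequence of iterates of the Method of Ellipcenters for `f` with steps `t`: the
auxiliary point `x k - t k • ∇ f (x k)` lies on the level set of `x k`, and the next iterate is at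
least as good as the midpoint of the two. Any rule for choosing the next iterate within this bound
is covered, and iterates may be stationary. -/
structure IsEllipcenterSequence {E : Type*} [NormedAddCommGroup E] [InnerProductSpace ℝ E]
    [CompleteSpace E] (f : E → ℝ) (x : ℕ → E) (t : ℕ → ℝ) : Prop where
  step_pos (k : ℕ) : 0 < t k
  apply_sub_smul_gradient (k : ℕ) : f (x k - t k • ∇ f (x k)) = f (x k)
  apply_succ_le (k : ℕ) : f (x (k + 1)) ≤ f (x k - (t k / 2) • ∇ f (x k))

namespace IsEllipcenterSequence

variable {E : Type*} [NormedAddCommGroup E] [InnerProductSpace ℝ E] [CompleteSpace E]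
  {f : E → ℝ} {x : ℕ → E} {t : ℕ → ℝ} {m : ℝ}

lemma mul_sq_norm_step_le (h : IsEllipcenterSequence f x t) (hf : StrongConvexOn univ m f) (k : ℕ) :
    m / 8 * ‖t k • ∇ f (x k)‖ ^ 2 ≤ f (x k) - f (x (k + 1)) := by
  have hmid : midpoint ℝ (x k) (x k - t k • ∇ f (x k)) = x k - (t k / 2) • ∇ f (x k) := by
    rw [midpoint_eq_smul_add, invOf_eq_inv]
    module
  have hdrop := apply_midpoint_le_of_strongConvexOn hf (mem_univ (x k))
    (mem_univ (x k - t k • ∇ f (x k)))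
  rw [hmid, h.apply_sub_smul_gradient, sub_sub_cancel] at hdrop
  linarith [h.apply_succ_le k]

lemma antitone_apply (h : IsEllipcenterSequence f x t) (hm : 0 ≤ m)
    (hf : StrongConvexOn univ m f) : Antitone fun k ↦ f (x k) := by
  refine antitone_nat_of_succ_le fun k ↦ sub_nonneg.mp ?_
  exact (by positivity : 0 ≤ m / 8 * ‖t k • ∇ f (x k)‖ ^ 2).trans (h.mul_sq_norm_step_le hf k)

lemma tendsto_norm_step (h : IsEllipcenterSequence f x t) (hm : 0 < m)
    (hf : StrongConvexOn univ m f) (hbdd : BddBelow (range fun k ↦ f (x k))) :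
    Tendsto (fun k ↦ ‖t k • ∇ f (x k)‖) atTop (𝓝 0) := by
  have hlim := tendsto_atTop_ciInf (h.antitone_apply hm.le hf) hbdd
  have hdrop : Tendsto (fun k ↦ f (x k) - f (x (k + 1))) atTop (𝓝 0) := by
    simpa using hlim.sub (hlim.comp (tendsto_add_atTop_nat 1))
  have hsq : Tendsto (fun k ↦ ‖t k • ∇ f (x k)‖ ^ 2) atTop (𝓝 0) := by
    refine squeeze_zero (fun k ↦ sq_nonneg _) (fun k ↦ ?_)
      (by simpa using hdrop.const_mul (8 / m))
    rw [div_mul_eq_mul_div, le_div_iff₀ hm]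
    linarith [h.mul_sq_norm_step_le hf k]
  simpa using hsq.sqrt

lemma tendsto_norm_gradient (h : IsEllipcenterSequence f x t) (hm : 0 < m)
    (hf : StrongConvexOn univ m f) (hdiff : Differentiable ℝ f)
    (hbdd : BddBelow (range fun k ↦ f (x k)))
    (huc : UniformContinuousOn (∇ f) {y | f y ≤ f (x 0)}) :
    Tendsto (fun k ↦ ‖∇ f (x k)‖) atTop (𝓝 0) := by
  choose ξ hξ_mem hξ_norm using fun k ↦
    exists_mem_segment_norm_gradient_le hdiff (h.step_pos k).ne' (h.apply_sub_smul_gradient k)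
  have hx_sublevel (k : ℕ) : f (x k) ≤ f (x 0) := h.antitone_apply hm.le hf k.zero_le
  have hξ_sublevel (k : ℕ) : f (ξ k) ≤ f (x 0) :=
    ((hf.strictConvexOn hm).convexOn.le_on_segment (mem_univ _) (mem_univ _) (hξ_mem k)).trans <|
      max_le (hx_sublevel k) ((h.apply_sub_smul_gradient k).trans_le (hx_sublevel k))
  have hdist : Tendsto (fun k ↦ dist (x k) (ξ k)) atTop (𝓝 0) := by
    refine squeeze_zero (fun k ↦ dist_nonneg) (fun k ↦ ?_) (h.tendsto_norm_step hm hf hbdd)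
    simpa [dist_eq_norm, norm_sub_rev (x k)] using norm_sub_le_of_mem_segment (hξ_mem k)
  have hgrad : Tendsto (fun k ↦ dist (∇ f (x k)) (∇ f (ξ k))) atTop (𝓝 0) :=
    tendsto_uniformity_iff_dist_tendsto_zero.mp <| Tendsto.comp huc <| tendsto_inf.mpr
      ⟨tendsto_uniformity_iff_dist_tendsto_zero (f := fun k ↦ (x k, ξ k)).mpr hdist,
        tendsto_principal.mpr <| .of_forall fun k ↦ ⟨hx_sublevel k, hξ_sublevel k⟩⟩
  exact squeeze_zero (fun k ↦ norm_nonneg _)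
    (fun k ↦ (hξ_norm k).trans_eq (dist_eq_norm _ _).symm) hgrad

end IsEllipcenterSequence

theorem ME_convergence_general {E : Type*} [NormedAddCommGroup E] [InnerProductSpace ℝ E]
    [CompleteSpace E] {f : E → ℝ} {μ : ℝ} (hμ : 0 < μ) (hdiff : Differentiable ℝ f)
    (hf : StrongConvexOn univ μ f) {xstar : E} (hmin : IsMinOn f univ xstar)
    {x : ℕ → E} {t : ℕ → ℝ} (h : IsEllipcenterSequence f x t)
    (huc : UniformContinuousOn (∇ f) {y | f y ≤ f (x 0)}) :
    Tendsto x atTop (𝓝 xstar) := by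
  have hbdd : BddBelow (range fun k ↦ f (x k)) :=
    ⟨f xstar, forall_mem_range.mpr fun k ↦ hmin (mem_univ (x k))⟩
  have herror (k : ℕ) : ‖x k - xstar‖ ≤ μ⁻¹ * ‖∇ f (x k)‖ := by
    have hbound := mul_norm_sub_le_norm_fderiv_sub_of_strongConvexOn hf (mem_univ (x k))
      (mem_univ xstar) (hdiff (x k)).hasFDerivAt (hdiff xstar).hasFDerivAt
    rwa [(hmin.isLocalMin univ_mem).fderiv_eq_zero, sub_zero, ← norm_gradient,
      ← le_inv_mul_iff₀ hμ] at hbound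
  rw [tendsto_iff_norm_sub_tendsto_zero]
  refine squeeze_zero (fun k ↦ norm_nonneg _) herror ?_
  simpa using (h.tendsto_norm_gradient hμ hf hdiff hbdd huc).const_mul μ⁻¹

/-- Convergence of the Method of Ellipcenters for strongly convex
continuously differentiable functions. -/
theorem ME_convergence
    {n : ℕ} (f : EuclideanSpace ℝ (Fin n) → ℝ) (μ : ℝ) (hμ : 0 < μ)
    (hC1 : ContDiff ℝ 1 f)
    (hsc : ∀ x y : EuclideanSpace ℝ (Fin n), ∀ s : ℝ, s ∈ Set.Icc (0:ℝ) 1 →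
      f (s • x + (1 - s) • y) ≤ s * f x + (1 - s) * f y - (μ / 2) * s * (1 - s) * ‖x - y‖ ^ 2)
    (xstar : EuclideanSpace ℝ (Fin n)) (hmin : ∀ y, f xstar ≤ f y)
    (x : ℕ → EuclideanSpace ℝ (Fin n)) (t : ℕ → ℝ)
    (ht : ∀ k, 0 < t k)
    (hgrad : ∀ k, gradient f (x k) ≠ 0)
    (hlevel : ∀ k, f (x k - t k • gradient f (x k)) = f (x k))
    (hnext : ∀ k, f (x (k + 1)) ≤ f (x k - (t k / 2) • gradient f (x k))) :
    Filter.Tendsto x Filter.atTop (nhds xstar) := by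
  have hf : StrongConvexOn univ μ f := strongConvexOn_univ_of_forall_mem_Icc hsc
  have hminOn : IsMinOn f univ xstar := isMinOn_univ_iff.mpr hmin
  exact ME_convergence_general hμ (hC1.differentiable one_ne_zero) hf hminOn ⟨ht, hlevel, hnext⟩
    (uniformContinuousOn_gradient_sublevel_of_strongConvexOn hμ hf hC1 hminOn (f (x 0)))
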